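/- arXiv:2401.08078 — 4 statements merged into one kernel-verified Lean document; each statement's English description precedes it below -/
import Mathlib

section
/- Let 𝒜 be a weakly idempotent complete exact category and (𝒳,𝒴) a hereditary complete cotorsion pair in 𝒜 with ω = 𝒳∩𝒴. Let α : A→B be a morphism in Weq_ω. Then for every right ω-approximation t : W→B of B, the morphism (α,t) : A⊕W→B is a deflation with kernel in 𝒴 (i.e. (α,t) ∈ TFib_ω). -/
open CategoryTheory Limits ZeroObject

universe v u

/-- An exact structure (Quillen exact category) on an additive category `𝒜`:
a class of conflations (kernel-cokernel pairs), closed under isomorphisms,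
with identities deflations, deflations closed under composition and stable
under pullback, and inflations stable under pushout. -/
structure ExactStructure (𝒜 : Type u) [Category.{v} 𝒜] [Preadditive 𝒜]
    [HasZeroObject 𝒜] [HasBinaryBiproducts 𝒜] : Type (max u v) where
  conflation : ∀ ⦃X Y Z : 𝒜⦄, (X ⟶ Y) → (Y ⟶ Z) → Prop
  comp_zero : ∀ {X Y Z : 𝒜} {i : X ⟶ Y} {d : Y ⟶ Z}, conflation i d → i ≫ d = 0
  isKernel : ∀ {X Y Z : 𝒜} {i : X ⟶ Y} {d : Y ⟶ Z} (h : conflation i d),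
    Nonempty (IsLimit (KernelFork.ofι i (comp_zero h)))
  isCokernel : ∀ {X Y Z : 𝒜} {i : X ⟶ Y} {d : Y ⟶ Z} (h : conflation i d),
    Nonempty (IsColimit (CokernelCofork.ofπ d (comp_zero h)))
  conflation_iso : ∀ {X Y Z X' Y' Z' : 𝒜} {i : X ⟶ Y} {d : Y ⟶ Z}
    (eX : X ≅ X') (eY : Y ≅ Y') (eZ : Z ≅ Z') {i' : X' ⟶ Y'} {d' : Y' ⟶ Z'},
    conflation i d → i ≫ eY.hom = eX.hom ≫ i' → d ≫ eZ.hom = eY.hom ≫ d' →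
    conflation i' d'
  id_deflation : ∀ X : 𝒜, conflation (0 : (0 : 𝒜) ⟶ X) (𝟙 X)
  deflation_comp : ∀ {X Y Z X' W : 𝒜} {i : X ⟶ Y} {d : Y ⟶ Z} {i' : X' ⟶ Z} {d' : Z ⟶ W},
    conflation i d → conflation i' d' → ∃ (K : 𝒜) (k : K ⟶ Y), conflation k (d ≫ d')
  pullback_deflation : ∀ {X Y Z Z' : 𝒜} {i : X ⟶ Y} {d : Y ⟶ Z},
    conflation i d → ∀ (f : Z' ⟶ Z),
    ∃ (Y' : 𝒜) (f' : Y' ⟶ Y) (d' : Y' ⟶ Z') (K : 𝒜) (k : K ⟶ Y'),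
      IsPullback f' d' d f ∧ conflation k d'
  pushout_inflation : ∀ {X Y Z X' : 𝒜} {i : X ⟶ Y} {d : Y ⟶ Z},
    conflation i d → ∀ (f : X ⟶ X'),
    ∃ (Y' : 𝒜) (f' : Y ⟶ Y') (i' : X' ⟶ Y') (Q : 𝒜) (q : Y' ⟶ Q),
      IsPushout i f f' i' ∧ conflation i' q

variable {𝒜 : Type u} [Category.{v} 𝒜] [Preadditive 𝒜] [HasZeroObject 𝒜]
  [HasBinaryBiproducts 𝒜]

/-- `f` is an inflation: the first map of some conflation. -/
def IsInflation (E : ExactStructure 𝒜) {X Y : 𝒜} (i : X ⟶ Y) : Prop :=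
  ∃ (Z : 𝒜) (d : Y ⟶ Z), E.conflation i d

/-- `f` is a deflation: the second map of some conflation. -/
def IsDeflation (E : ExactStructure 𝒜) {Y Z : 𝒜} (d : Y ⟶ Z) : Prop :=
  ∃ (X : 𝒜) (i : X ⟶ Y), E.conflation i d

/-- `𝒜` is weakly idempotent complete: every split epimorphism is a deflation. -/
def IsWIC (E : ExactStructure 𝒜) : Prop :=
  ∀ {X Y : 𝒜} (d : X ⟶ Y) (s : Y ⟶ X), s ≫ d = 𝟙 Y → IsDeflation E d

/-- `Ext¹(A,B) = 0`: every conflation `B ⟶ M ⟶ A` splits. -/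
def Ext1IsZero (E : ExactStructure 𝒜) (A B : 𝒜) : Prop :=
  ∀ {M : 𝒜} (i : B ⟶ M) (d : M ⟶ A), E.conflation i d → ∃ r : M ⟶ B, i ≫ r = 𝟙 B

/-- `(X, Y)` is a cotorsion pair: each class is the `Ext¹`-orthogonal of the other. -/
def IsCotorsionPair (E : ExactStructure 𝒜) (X Y : Set 𝒜) : Prop :=
  (∀ A : 𝒜, A ∈ X ↔ ∀ B ∈ Y, Ext1IsZero E A B) ∧
  (∀ B : 𝒜, B ∈ Y ↔ ∀ A ∈ X, Ext1IsZero E A B)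

/-- Completeness of a cotorsion pair: every object has approximation sequences. -/
def IsCompleteCP (E : ExactStructure 𝒜) (X Y : Set 𝒜) : Prop :=
  ∀ A : 𝒜,
    (∃ (Y₀ X₀ : 𝒜) (i : Y₀ ⟶ X₀) (d : X₀ ⟶ A), E.conflation i d ∧ X₀ ∈ X ∧ Y₀ ∈ Y) ∧
    (∃ (Y₁ X₁ : 𝒜) (i : A ⟶ Y₁) (d : Y₁ ⟶ X₁), E.conflation i d ∧ X₁ ∈ X ∧ Y₁ ∈ Y)

/-- Heredity of a cotorsion pair: `X` is closed under kernels of deflations and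
`Y` is closed under cokernels of inflations. -/
def IsHereditaryCP (E : ExactStructure 𝒜) (X Y : Set 𝒜) : Prop :=
  (∀ {K A B : 𝒜} (i : K ⟶ A) (d : A ⟶ B), E.conflation i d → A ∈ X → B ∈ X → K ∈ X) ∧
  (∀ {K A B : 𝒜} (i : K ⟶ A) (d : A ⟶ B), E.conflation i d → K ∈ Y → A ∈ Y → B ∈ Y)

/-- `t : W ⟶ B` is a right `ω`-approximation of `B`. -/
def IsRightApprox (ω : Set 𝒜) {W B : 𝒜} (t : W ⟶ B) : Prop :=
  W ∈ ω ∧ ∀ (W' : 𝒜), W' ∈ ω → ∀ g : W' ⟶ B, ∃ h : W' ⟶ W, h ≫ t = g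

/-- `ω` is contravariantly finite: every object has a right `ω`-approximation. -/
def IsContravariantlyFinite (ω : Set 𝒜) : Prop :=
  ∀ B : 𝒜, ∃ (W : 𝒜) (t : W ⟶ B), IsRightApprox ω t

/-- A full additive subcategory closed under isomorphisms and direct summands,
viewed as a class of objects. -/
def AdditivelyClosed (S : Set 𝒜) : Prop :=
  (0 : 𝒜) ∈ S ∧ (∀ A B : 𝒜, A ∈ S → B ∈ S → (A ⊞ B) ∈ S) ∧
  (∀ {A B : 𝒜}, (A ≅ B) → A ∈ S → B ∈ S) ∧
  (∀ {A B : 𝒜} (i : A ⟶ B) (r : B ⟶ A), i ≫ r = 𝟙 A → B ∈ S → A ∈ S)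

/-- `CoFib_ω`: inflations with cokernel in `X`. -/
def CoFibO (E : ExactStructure 𝒜) (X : Set 𝒜) : MorphismProperty 𝒜 :=
  fun _ B f => ∃ (Z : 𝒜) (d : B ⟶ Z), E.conflation f d ∧ Z ∈ X

/-- `Fib_ω`: the `ω`-epic morphisms. -/
def FibO (ω : Set 𝒜) : MorphismProperty 𝒜 :=
  fun A B f => ∀ (W : 𝒜), W ∈ ω → ∀ g : W ⟶ B, ∃ h : W ⟶ A, h ≫ f = g

/-- `Weq_ω`: morphisms `f : A ⟶ B` such that for some `W ∈ ω` and `t : W ⟶ B`,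
`(f,t) : A ⊞ W ⟶ B` is a deflation with kernel in `Y`. -/
def WeqO (E : ExactStructure 𝒜) (ω Y : Set 𝒜) : MorphismProperty 𝒜 :=
  fun A B f => ∃ (W : 𝒜) (_ : W ∈ ω) (t : W ⟶ B) (K : 𝒜) (k : K ⟶ A ⊞ W),
    E.conflation k (biprod.desc f t) ∧ K ∈ Y

/-- `TCoFib_ω`: split monomorphisms with cokernel in `ω`. -/
def TCoFibO (E : ExactStructure 𝒜) (ω : Set 𝒜) : MorphismProperty 𝒜 :=
  fun A B f => (∃ r : B ⟶ A, f ≫ r = 𝟙 A) ∧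
    ∃ (Z : 𝒜) (d : B ⟶ Z), E.conflation f d ∧ Z ∈ ω

/-- `TFib_ω`: deflations with kernel in `Y`. -/
def TFibO (E : ExactStructure 𝒜) (Y : Set 𝒜) : MorphismProperty 𝒜 :=
  fun A _ f => ∃ (K : 𝒜) (k : K ⟶ A), E.conflation k f ∧ K ∈ Y

/-- `g` is a retract of `f`. -/
def IsRetractMor {A' B' A B : 𝒜} (g : A' ⟶ B') (f : A ⟶ B) : Prop :=
  ∃ (φ₁ : A' ⟶ A) (ψ₁ : A ⟶ A') (φ₂ : B' ⟶ B) (ψ₂ : B ⟶ B'),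
    φ₁ ≫ ψ₁ = 𝟙 A' ∧ φ₂ ≫ ψ₂ = 𝟙 B' ∧ φ₁ ≫ f = g ≫ φ₂ ∧ f ≫ ψ₂ = ψ₁ ≫ g

/-- A (closed, Quillen) model structure, given by classes of cofibrations,
fibrations and weak equivalences. -/
structure IsModelStructure (C F W : MorphismProperty 𝒜) : Prop where
  weq_comp : ∀ {X Y Z : 𝒜} (f : X ⟶ Y) (g : Y ⟶ Z), W f → W g → W (f ≫ g)
  weq_cancel_left : ∀ {X Y Z : 𝒜} (f : X ⟶ Y) (g : Y ⟶ Z), W f → W (f ≫ g) → W g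
  weq_cancel_right : ∀ {X Y Z : 𝒜} (f : X ⟶ Y) (g : Y ⟶ Z), W g → W (f ≫ g) → W f
  retract_cofib : ∀ {A' B' A B : 𝒜} (g : A' ⟶ B') (f : A ⟶ B),
    IsRetractMor g f → C f → C g
  retract_fib : ∀ {A' B' A B : 𝒜} (g : A' ⟶ B') (f : A ⟶ B),
    IsRetractMor g f → F f → F g
  retract_weq : ∀ {A' B' A B : 𝒜} (g : A' ⟶ B') (f : A ⟶ B),
    IsRetractMor g f → W f → W g
  lifting_left : ∀ {A B X Y : 𝒜} (i : A ⟶ B) (p : X ⟶ Y) (a : A ⟶ X) (b : B ⟶ Y),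
    C i → W i → F p → a ≫ p = i ≫ b → ∃ s : B ⟶ X, i ≫ s = a ∧ s ≫ p = b
  lifting_right : ∀ {A B X Y : 𝒜} (i : A ⟶ B) (p : X ⟶ Y) (a : A ⟶ X) (b : B ⟶ Y),
    C i → F p → W p → a ≫ p = i ≫ b → ∃ s : B ⟶ X, i ≫ s = a ∧ s ≫ p = b
  fact_left : ∀ {A B : 𝒜} (f : A ⟶ B), ∃ (Z : 𝒜) (i : A ⟶ Z) (p : Z ⟶ B),
    i ≫ p = f ∧ C i ∧ W i ∧ F p
  fact_right : ∀ {A B : 𝒜} (f : A ⟶ B), ∃ (Z : 𝒜) (j : A ⟶ Z) (q : Z ⟶ B),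
    j ≫ q = f ∧ C j ∧ F q ∧ W q

/-- An object is cofibrant if `0 ⟶ X` is a cofibration. -/
def Cofibrant (C : MorphismProperty 𝒜) (A : 𝒜) : Prop := C (0 : (0 : 𝒜) ⟶ A)

/-- An object is fibrant if `X ⟶ 0` is a fibration. -/
def Fibrant (F : MorphismProperty 𝒜) (A : 𝒜) : Prop := F (0 : A ⟶ (0 : 𝒜))

/-- An object is trivial if `0 ⟶ X` is a weak equivalence. -/
def TrivialObj (W : MorphismProperty 𝒜) (A : 𝒜) : Prop := W (0 : (0 : 𝒜) ⟶ A)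

/-- `P` is projective in the exact category. -/
def IsProjObj (E : ExactStructure 𝒜) (P : 𝒜) : Prop :=
  ∀ {A B : 𝒜} (d : A ⟶ B), IsDeflation E d → ∀ g : P ⟶ B, ∃ h : P ⟶ A, h ≫ d = g

/-- The exact category has enough projective objects. -/
def HasEnoughProj (E : ExactStructure 𝒜) : Prop :=
  ∀ X : 𝒜, ∃ (P : 𝒜) (d : P ⟶ X), IsProjObj E P ∧ IsDeflation E d

/-- Cofibrations are exactly the inflations with cofibrant cokernel. -/
def CofibsAreInflWithCofibCoker (E : ExactStructure 𝒜) (C : MorphismProperty 𝒜) : Prop :=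
  ∀ {A B : 𝒜} (f : A ⟶ B),
    C f ↔ ∃ (Z : 𝒜) (d : B ⟶ Z), E.conflation f d ∧ Cofibrant C Z

/-- Fibrations are exactly the deflations with fibrant kernel. -/
def FibsAreDeflWithFibKer (E : ExactStructure 𝒜) (F : MorphismProperty 𝒜) : Prop :=
  ∀ {A B : 𝒜} (f : A ⟶ B),
    F f ↔ ∃ (K : 𝒜) (k : K ⟶ A), E.conflation k f ∧ Fibrant F K

/-- Trivial fibrations are exactly the deflations with trivially fibrant kernel. -/
def TrivFibsAreDeflWithTrivFibKer (E : ExactStructure 𝒜)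
    (F W : MorphismProperty 𝒜) : Prop :=
  ∀ {A B : 𝒜} (f : A ⟶ B),
    (F f ∧ W f) ↔ ∃ (K : 𝒜) (k : K ⟶ A), E.conflation k f ∧ Fibrant F K ∧ TrivialObj W K

/-- Every cofibration is an inflation. -/
def CofibsAreInfl (E : ExactStructure 𝒜) (C : MorphismProperty 𝒜) : Prop :=
  ∀ {A B : 𝒜} (f : A ⟶ B), C f → IsInflation E f

/-- Every trivial fibration is a deflation. -/
def TrivFibsAreDefl (E : ExactStructure 𝒜) (F W : MorphismProperty 𝒜) : Prop :=
  ∀ {A B : 𝒜} (f : A ⟶ B), F f → W f → IsDeflation E f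

/-- An exact model structure in the sense of Gillespie. -/
def IsExactModelStr (E : ExactStructure 𝒜) (C F W : MorphismProperty 𝒜) : Prop :=
  IsModelStructure C F W ∧ CofibsAreInflWithCofibCoker E C ∧ FibsAreDeflWithFibKer E F

/-- A weakly projective model structure: every object is fibrant, cofibrations are
exactly the inflations with cofibrant cokernel, and trivial fibrations are exactly
the deflations with trivially fibrant kernel. -/
def IsWeaklyProjModelStr (E : ExactStructure 𝒜) (C F W : MorphismProperty 𝒜) : Prop :=
  IsModelStructure C F W ∧ (∀ A : 𝒜, Fibrant F A) ∧
    CofibsAreInflWithCofibCoker E C ∧ TrivFibsAreDeflWithTrivFibKer E F W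

/-- A projective model structure: an exact model structure with every object fibrant. -/
def IsProjectiveModelStr (E : ExactStructure 𝒜) (C F W : MorphismProperty 𝒜) : Prop :=
  IsExactModelStr E C F W ∧ (∀ A : 𝒜, Fibrant F A)

/-- A class of objects is thick: closed under direct summands and two-out-of-three
in conflations. -/
def IsThick (E : ExactStructure 𝒜) (S : Set 𝒜) : Prop :=
  (∀ {A B : 𝒜} (i : A ⟶ B) (r : B ⟶ A), i ≫ r = 𝟙 A → B ∈ S → A ∈ S) ∧
  (∀ {X Y Z : 𝒜} (i : X ⟶ Y) (d : Y ⟶ Z), E.conflation i d →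
    ((X ∈ S → Y ∈ S → Z ∈ S) ∧ (X ∈ S → Z ∈ S → Y ∈ S) ∧ (Y ∈ S → Z ∈ S → X ∈ S)))


namespace ExactAux

lemma infl_mono (E : ExactStructure 𝒜) {P Q R : 𝒜} {i : P ⟶ Q} {d : Q ⟶ R}
    (h : E.conflation i d) {T : 𝒜} {a b : T ⟶ P} (hab : a ≫ i = b ≫ i) : a = b := by
  obtain ⟨l⟩ := E.isKernel h
  exact Fork.IsLimit.hom_ext l (by simpa using hab)

lemma defl_epi (E : ExactStructure 𝒜) {P Q R : 𝒜} {i : P ⟶ Q} {d : Q ⟶ R}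
    (h : E.conflation i d) {T : 𝒜} {a b : R ⟶ T} (hab : d ≫ a = d ≫ b) : a = b := by
  obtain ⟨l⟩ := E.isCokernel h
  exact Cofork.IsColimit.hom_ext l (by simpa using hab)

lemma ker_lift (E : ExactStructure 𝒜) {P Q R : 𝒜} {i : P ⟶ Q} {d : Q ⟶ R}
    (h : E.conflation i d) {T : 𝒜} (a : T ⟶ Q) (ha : a ≫ d = 0) : ∃ b : T ⟶ P, b ≫ i = a := by
  obtain ⟨l⟩ := E.isKernel h
  obtain ⟨b, hb⟩ := KernelFork.IsLimit.lift' l a ha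
  exact ⟨b, by simpa using hb⟩

lemma coker_desc (E : ExactStructure 𝒜) {P Q R : 𝒜} {i : P ⟶ Q} {d : Q ⟶ R}
    (h : E.conflation i d) {T : 𝒜} (a : Q ⟶ T) (ha : i ≫ a = 0) : ∃ b : R ⟶ T, d ≫ b = a := by
  obtain ⟨l⟩ := E.isCokernel h
  obtain ⟨b, hb⟩ := CokernelCofork.IsColimit.desc' l a ha
  exact ⟨b, by simpa using hb⟩

/-- A pushout of a conflation is a conflation with the same cokernel. -/
lemma pushout_conflation (E : ExactStructure 𝒜) {P Q R P' Q' : 𝒜} {i : P ⟶ Q} {d : Q ⟶ R}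
    (h : E.conflation i d) {f : P ⟶ P'} {f' : Q ⟶ Q'} {i' : P' ⟶ Q'}
    (hp : IsPushout i f f' i') {d' : Q' ⟶ R} (h1 : f' ≫ d' = d) (h2 : i' ≫ d' = 0) :
    E.conflation i' d' := by
  obtain ⟨Q₁, f₁, i₁, S, q, hp₁, hc⟩ := E.pushout_inflation h f
  let e : Q₁ ≅ Q' := hp₁.isoIsPushout _ _ hp
  have e1 : f₁ ≫ e.hom = f' := hp₁.inl_isoIsPushout_hom _ _ hp
  have e2 : i₁ ≫ e.hom = i' := hp₁.inr_isoIsPushout_hom _ _ hp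
  obtain ⟨u, hu⟩ := coker_desc E hc (e.hom ≫ d') (by rw [← Category.assoc, e2, h2])
  have hz : i ≫ f₁ ≫ q = 0 := by
    rw [← Category.assoc, hp₁.w, Category.assoc, E.comp_zero hc, comp_zero]
  obtain ⟨w, hw⟩ := coker_desc E h (f₁ ≫ q) hz
  have uw : u ≫ w = 𝟙 S := by
    apply defl_epi E hc
    apply hp₁.hom_ext
    · rw [← Category.assoc q, hu, Category.assoc, ← Category.assoc f₁, e1, ← Category.assoc, h1,
        hw, Category.comp_id]
    · rw [← Category.assoc q, hu, Category.assoc, ← Category.assoc i₁, e2, ← Category.assoc, h2,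
        Category.comp_id, E.comp_zero hc, zero_comp]
  have wu : w ≫ u = 𝟙 R := by
    apply defl_epi E h
    rw [← Category.assoc, hw, Category.assoc, hu, ← Category.assoc, e1, h1, Category.comp_id]
  refine E.conflation_iso (Iso.refl P') e ⟨u, w, uw, wu⟩ hc ?_ ?_
  · simpa using e2
  · simpa using hu

lemma extend (E : ExactStructure 𝒜) {C Y₀ P M : 𝒜} (hext : Ext1IsZero E C Y₀)
    {i : P ⟶ M} {d : M ⟶ C} (h : E.conflation i d) (f : P ⟶ Y₀) :
    ∃ g : M ⟶ Y₀, i ≫ g = f := by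
  obtain ⟨Q₁, f₁, i₁, S, q, hp, hc⟩ := E.pushout_inflation h f
  have hz : i ≫ d = f ≫ (0 : Y₀ ⟶ C) := by rw [E.comp_zero h, comp_zero]
  have := pushout_conflation E h hp (d' := hp.desc d 0 hz) (by simp) (by simp)
  obtain ⟨r, hr⟩ := hext _ _ this
  exact ⟨f₁ ≫ r, by rw [← Category.assoc, hp.w, Category.assoc, hr, Category.comp_id]⟩

lemma mem_of_sum (E : ExactStructure 𝒜) {X Y : Set 𝒜} (hcp : IsCotorsionPair E X Y)
    {K W L : 𝒜} (hK : K ∈ Y) (hW : W ∈ Y) (a₁ : L ⟶ K) (b₁ : K ⟶ L) (a₂ : L ⟶ W) (b₂ : W ⟶ L)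
    (hab : a₁ ≫ b₁ + a₂ ≫ b₂ = 𝟙 L) : L ∈ Y := by
  rw [hcp.2]
  intro C hC M i d h
  obtain ⟨g₁, h₁⟩ := extend E ((hcp.2 K).1 hK C hC) h a₁
  obtain ⟨g₂, h₂⟩ := extend E ((hcp.2 W).1 hW C hC) h a₂
  refine ⟨g₁ ≫ b₁ + g₂ ≫ b₂, ?_⟩
  rw [Preadditive.comp_add, ← Category.assoc, ← Category.assoc, h₁, h₂, hab]

lemma mem_of_retract (E : ExactStructure 𝒜) {X Y : Set 𝒜} (hcp : IsCotorsionPair E X Y)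
    {K L : 𝒜} (hK : K ∈ Y) (a : L ⟶ K) (b : K ⟶ L) (hab : a ≫ b = 𝟙 L) : L ∈ Y :=
  mem_of_sum E hcp hK hK a b 0 0 (by simp [hab])

lemma lift_through (E : ExactStructure 𝒜) {X Y : Set 𝒜} (hcp : IsCotorsionPair E X Y)
    {K M B W : 𝒜} {k : K ⟶ M} {d : M ⟶ B} (h : E.conflation k d) (hK : K ∈ Y) (hW : W ∈ X)
    (t : W ⟶ B) : ∃ g : W ⟶ M, g ≫ d = t := by
  obtain ⟨P, f', d', K', k', hp, hc⟩ := E.pullback_deflation h t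
  have hK' : K' ∈ Y := by
    obtain ⟨a, ha⟩ := ker_lift E h (k' ≫ f') (by
      rw [Category.assoc, hp.w, ← Category.assoc, E.comp_zero hc, zero_comp])
    have hz : k ≫ d = (0 : K ⟶ W) ≫ t := by rw [E.comp_zero h, zero_comp]
    obtain ⟨b, hb⟩ := ker_lift E hc (hp.lift k 0 hz) (by simp)
    refine mem_of_retract E hcp hK a b ?_
    apply infl_mono E hc
    rw [Category.assoc, hb, Category.id_comp]
    apply hp.hom_ext
    · simp [ha]
    · simp [E.comp_zero hc]
  obtain ⟨r, hr⟩ := (hcp.2 K').1 hK' W hW k' d' hc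
  obtain ⟨s, hs⟩ := coker_desc E hc (𝟙 P - r ≫ k') (by
    rw [Preadditive.comp_sub, ← Category.assoc, hr]; simp)
  have hsd : s ≫ d' = 𝟙 W := by
    apply defl_epi E hc
    rw [← Category.assoc, hs, Preadditive.sub_comp, Category.assoc, E.comp_zero hc]
    simp
  exact ⟨s ≫ f', by rw [Category.assoc, hp.w, ← Category.assoc, hsd, Category.id_comp]⟩

lemma tfib_iso (E : ExactStructure 𝒜) {Y : Set 𝒜} {M M' B : 𝒜} (e : M' ≅ M) {d : M ⟶ B}
    (h : TFibO E Y d) : TFibO E Y (e.hom ≫ d) := by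
  obtain ⟨K, k, hc, hK⟩ := h
  exact ⟨K, k ≫ e.inv, E.conflation_iso (Iso.refl K) e.symm (Iso.refl B) hc (by simp) (by simp), hK⟩

lemma tfib_add (E : ExactStructure 𝒜) (hwic : IsWIC E) {X Y : Set 𝒜}
    (hcp : IsCotorsionPair E X Y) {M B W : 𝒜} {d : M ⟶ B} (h : TFibO E Y d) (hW : W ∈ Y) :
    TFibO E Y (biprod.desc d (0 : W ⟶ B)) := by
  obtain ⟨K, k, hc, hK⟩ := h
  obtain ⟨_, _, hf⟩ := hwic (biprod.fst : M ⊞ W ⟶ M) biprod.inl (by simp)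
  obtain ⟨N, n, hn⟩ := E.deflation_comp hf hc
  have he : (biprod.fst : M ⊞ W ⟶ M) ≫ d = biprod.desc d 0 := by ext <;> simp
  refine ⟨N, n, he ▸ hn, ?_⟩
  obtain ⟨a, ha⟩ := ker_lift E hc (n ≫ biprod.fst) (by rw [Category.assoc, E.comp_zero hn])
  obtain ⟨b₁, hb₁⟩ := ker_lift E hn (k ≫ biprod.inl) (by simp [E.comp_zero hc])
  obtain ⟨b₂, hb₂⟩ := ker_lift E hn biprod.inr (by simp)
  refine mem_of_sum E hcp hK hW a b₁ (n ≫ biprod.snd) b₂ ?_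
  apply infl_mono E hn
  rw [Preadditive.add_comp, Category.assoc, Category.assoc, hb₁, hb₂, ← Category.assoc, ha]
  ext <;> simp

lemma tfib_cancel (E : ExactStructure 𝒜) (hwic : IsWIC E) {X Y : Set 𝒜}
    (hcp : IsCotorsionPair E X Y) {M B W : 𝒜} {d : M ⟶ B}
    (h : TFibO E Y (biprod.desc d (0 : W ⟶ B))) : TFibO E Y d := by
  obtain ⟨N, k, hc, hN⟩ := h
  obtain ⟨s, hs⟩ := ker_lift E hc (biprod.inr : W ⟶ M ⊞ W) (by simp)
  have hsp : s ≫ k ≫ biprod.snd = 𝟙 W := by rw [← Category.assoc, hs]; simp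
  obtain ⟨L, j, hj⟩ := hwic (k ≫ biprod.snd) s hsp
  obtain ⟨r, hr⟩ := ker_lift E hj (𝟙 N - (k ≫ biprod.snd) ≫ s) (by
    rw [Preadditive.sub_comp, Category.assoc _ s, hsp]; simp)
  have hj0 := E.comp_zero hj
  have hjr : j ≫ r = 𝟙 L := by
    apply infl_mono E hj
    rw [Category.assoc, hr, Preadditive.comp_sub, ← Category.assoc j, hj0]
    simp
  have hsr : s ≫ r = 0 := by
    apply infl_mono E hj
    rw [Category.assoc, hr, Preadditive.comp_sub, ← Category.assoc s, hsp]
    simp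
  have hjk : j ≫ k = (j ≫ k ≫ biprod.fst) ≫ biprod.inl := by
    ext
    · simp
    · simpa using hj0
  have hw : k ≫ biprod.fst = r ≫ j ≫ k ≫ biprod.fst := by
    rw [← Category.assoc r, hr, Preadditive.sub_comp]
    simp [reassoc_of% hs]
  have hp : IsPushout k r biprod.fst (j ≫ k ≫ biprod.fst) := by
    refine ⟨⟨hw⟩, ⟨PushoutCocone.IsColimit.mk _ (fun c => biprod.inl ≫ c.inl) ?_ ?_ ?_⟩⟩
    · intro c
      have : biprod.inr ≫ c.inl = 0 := by
        rw [← hs, Category.assoc, c.condition, ← Category.assoc, hsr, zero_comp]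
      ext
      · simp
      · simp [this]
    · intro c
      rw [← Category.assoc, ← hjk, Category.assoc, c.condition, ← Category.assoc, hjr,
        Category.id_comp]
    · intro c m h₁ _
      rw [← h₁]; simp
  refine ⟨L, j ≫ k ≫ biprod.fst, pushout_conflation E hc hp (by ext <;> simp) ?_,
    mem_of_retract E hcp hN j r hjr⟩
  have : (biprod.fst : M ⊞ W ⟶ M) ≫ d = biprod.desc d 0 := by ext <;> simp
  rw [Category.assoc, Category.assoc, this, E.comp_zero hc, comp_zero]

/-- The shear isomorphism. -/
noncomputable def shear {M W : 𝒜} (g : W ⟶ M) : M ⊞ W ≅ M ⊞ W where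
  hom := biprod.desc biprod.inl (g ≫ biprod.inl + biprod.inr)
  inv := biprod.desc biprod.inl (-g ≫ biprod.inl + biprod.inr)
  hom_inv_id := by ext <;> simp
  inv_hom_id := by ext <;> simp

lemma tfib_shear (E : ExactStructure 𝒜) {Y : Set 𝒜} {M W B : 𝒜} {d : M ⟶ B} (g : W ⟶ M)
    {u v : W ⟶ B} (h : TFibO E Y (biprod.desc d u)) (hv : v = g ≫ d + u) :
    TFibO E Y (biprod.desc d v) := by
  have := tfib_iso E (shear g) h
  convert this using 1
  subst hv
  ext <;> simp [shear]

/-- Exchange of the last two summands. -/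
noncomputable def exch (A W W' : 𝒜) : (A ⊞ W) ⊞ W' ≅ (A ⊞ W') ⊞ W where
  hom := biprod.desc (biprod.desc (biprod.inl ≫ biprod.inl) biprod.inr) (biprod.inr ≫ biprod.inl)
  inv := biprod.desc (biprod.desc (biprod.inl ≫ biprod.inl) biprod.inr) (biprod.inr ≫ biprod.inl)
  hom_inv_id := by ext <;> simp
  inv_hom_id := by ext <;> simp

end ExactAux

/-- For `α ∈ Weq_ω` and any right `ω`-approximation `t` of the target,
`(α,t)` is a deflation with kernel in `𝒴`. -/
theorem stmt_11 (E : ExactStructure 𝒜) (hwic : IsWIC E) (X Y : Set 𝒜)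
    (hcp : IsCotorsionPair E X Y) (hcomp : IsCompleteCP E X Y)
    (hher : IsHereditaryCP E X Y)
    {A B : 𝒜} (α : A ⟶ B) (hα : WeqO E (X ∩ Y) Y α)
    {W : 𝒜} (t : W ⟶ B) (ht : IsRightApprox (X ∩ Y) t) :
    TFibO E Y (biprod.desc α t) := by
  obtain ⟨W', hW', t', K, k, hc, hK⟩ := hα
  obtain ⟨hW, happ⟩ := ht
  obtain ⟨h, hh⟩ := happ W' hW' t'
  obtain ⟨g, hg⟩ := ExactAux.lift_through E hcp hc hK hW.1 t
  have h1 : TFibO E Y (biprod.desc (biprod.desc α t') (0 : W ⟶ B)) :=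
    ExactAux.tfib_add E hwic hcp ⟨K, k, hc, hK⟩ hW.2
  have h2 : TFibO E Y (biprod.desc (biprod.desc α t') t) :=
    ExactAux.tfib_shear E g h1 (by rw [hg, add_zero])
  have h3 : TFibO E Y (biprod.desc (biprod.desc α t) t') := by
    have := ExactAux.tfib_iso E (ExactAux.exch A W W') h2
    convert this using 1
    ext <;> simp [ExactAux.exch]
  have h4 : TFibO E Y (biprod.desc (biprod.desc α t) (0 : W' ⟶ B)) :=
    ExactAux.tfib_shear E (-h ≫ biprod.inr) h3 (by simp [hh])
  exact ExactAux.tfib_cancel E hwic hcp h4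
end

section
/- Let 𝒜 be a weakly idempotent complete exact category and (𝒳,𝒴) a hereditary complete cotorsion pair in 𝒜 with ω = 𝒳∩𝒴 contravariantly finite. Let α : A→B and β : B→C be morphisms in 𝒜 such that α ∈ TFib_ω (α is a deflation with kernel in 𝒴) and βα ∈ Weq_ω. Then β ∈ Weq_ω. -/
open CategoryTheory Limits ZeroObject

universe v u

variable {𝒜 : Type u} [Category.{v} 𝒜] [Preadditive 𝒜] [HasZeroObject 𝒜]
  [HasBinaryBiproducts 𝒜]

section Helpers

theorem conf_lift (E : ExactStructure 𝒜) {X Y Z T : 𝒜} {i : X ⟶ Y} {d : Y ⟶ Z}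
    (h : E.conflation i d) (x : T ⟶ Y) (hx : x ≫ d = 0) : ∃ y : T ⟶ X, y ≫ i = x := by
  obtain ⟨l⟩ := E.isKernel h
  exact ⟨l.lift (KernelFork.ofι x hx), l.fac _ WalkingParallelPair.zero⟩

theorem conf_desc (E : ExactStructure 𝒜) {X Y Z T : 𝒜} {i : X ⟶ Y} {d : Y ⟶ Z}
    (h : E.conflation i d) (x : Y ⟶ T) (hx : i ≫ x = 0) : ∃ y : Z ⟶ T, d ≫ y = x := by
  obtain ⟨l⟩ := E.isCokernel h
  exact ⟨l.desc (CokernelCofork.ofπ x hx), l.fac _ WalkingParallelPair.one⟩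

theorem conf_mono (E : ExactStructure 𝒜) {X Y Z : 𝒜} {i : X ⟶ Y} {d : Y ⟶ Z}
    (h : E.conflation i d) : Mono i := by
  obtain ⟨l⟩ := E.isKernel h
  exact ⟨fun a b hab => Fork.IsLimit.hom_ext l hab⟩

theorem conf_epi (E : ExactStructure 𝒜) {X Y Z : 𝒜} {i : X ⟶ Y} {d : Y ⟶ Z}
    (h : E.conflation i d) : Epi d := by
  obtain ⟨l⟩ := E.isCokernel h
  exact ⟨fun a b hab => Cofork.IsColimit.hom_ext l hab⟩

theorem conf_ker_swap (E : ExactStructure 𝒜) {X X' Y Z : 𝒜} {i : X ⟶ Y} {d : Y ⟶ Z}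
    {i' : X' ⟶ Y} (h : E.conflation i d) (h0 : i' ≫ d = 0) (hm : Mono i')
    (y : X ⟶ X') (hy : y ≫ i' = i) : E.conflation i' d := by
  haveI := conf_mono E h
  obtain ⟨z, hz⟩ := conf_lift E h i' h0
  let e : X ≅ X' := ⟨y, z, by rw [← cancel_mono i]; simp [hz, hy],
    by rw [← cancel_mono i']; simp [hz, hy]⟩
  exact E.conflation_iso e (Iso.refl _) (Iso.refl _) h (by simp [e, hy]) (by simp)

theorem conf_coker_swap (E : ExactStructure 𝒜) {X Y Z Z' : 𝒜} {i : X ⟶ Y} {d : Y ⟶ Z}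
    {d' : Y ⟶ Z'} (h : E.conflation i d) (h0 : i ≫ d' = 0) (hm : Epi d')
    (y : Z' ⟶ Z) (hy : d' ≫ y = d) : E.conflation i d' := by
  haveI := conf_epi E h
  obtain ⟨z, hz⟩ := conf_desc E h d' h0
  let e : Z ≅ Z' := ⟨z, y, by rw [← cancel_epi d, ← Category.assoc, hz, hy, Category.comp_id],
    by rw [← cancel_epi d', ← Category.assoc, hy, hz, Category.comp_id]⟩
  exact E.conflation_iso (Iso.refl _) (Iso.refl _) e h (by simp) (by simp [e, hz])

theorem conf_pullback (E : ExactStructure 𝒜) {X Y Z Y' Z' : 𝒜} {i : X ⟶ Y} {d : Y ⟶ Z}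
    {f : Z' ⟶ Z} {f' : Y' ⟶ Y} {d' : Y' ⟶ Z'} (h : E.conflation i d)
    (hp : IsPullback f' d' d f) : ∃ k : X ⟶ Y', E.conflation k d' := by
  obtain ⟨Y₁, f₁, d₁, K, k, hp₁, hk⟩ := E.pullback_deflation h f
  let e := hp₁.isoIsPullback _ _ hp
  have he : e.hom ≫ d' = d₁ := hp₁.isoIsPullback_hom_snd _ _ hp
  have h1 : E.conflation (k ≫ e.hom) d' :=
    E.conflation_iso (Iso.refl _) e (Iso.refl _) hk (by simp) (by simp [he])
  have hi := E.comp_zero h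
  have hl := hp.lift_fst i 0 (by simp [hi])
  have hl2 := hp.lift_snd i 0 (by simp [hi])
  haveI := conf_mono E h
  have hm : Mono (hp.lift i 0 (by simp [hi])) := by
    haveI : Mono (hp.lift i 0 (by simp [hi]) ≫ f') := by rw [hl]; infer_instance
    exact mono_of_mono _ f'
  obtain ⟨y, hy⟩ := conf_lift E h ((k ≫ e.hom) ≫ f') (by
    rw [Category.assoc, hp.w, ← Category.assoc, E.comp_zero h1, zero_comp])
  refine ⟨_, conf_ker_swap E h1 hl2 hm y (hp.hom_ext ?_ ?_)⟩
  · rw [Category.assoc, hl, hy]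
  · rw [Category.assoc, hl2, E.comp_zero h1, comp_zero]

theorem conf_pushout (E : ExactStructure 𝒜) {X Y Z X' Y' : 𝒜} {i : X ⟶ Y} {d : Y ⟶ Z}
    {f : X ⟶ X'} {f' : Y ⟶ Y'} {i' : X' ⟶ Y'} (h : E.conflation i d)
    (hp : IsPushout i f f' i') (d' : Y' ⟶ Z) (hd : f' ≫ d' = d) (hd0 : i' ≫ d' = 0) :
    E.conflation i' d' := by
  obtain ⟨Y₁, f₁, i₁, Q, q, hp₁, hq⟩ := E.pushout_inflation h f
  let e := hp₁.isoIsPushout _ _ hp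
  have he : i₁ ≫ e.hom = i' := hp₁.inr_isoIsPushout_hom _ _ hp
  have h1 : E.conflation i' (e.inv ≫ q) :=
    E.conflation_iso (Iso.refl _) e (Iso.refl _) hq (by simp [he]) (by simp)
  haveI := conf_epi E h
  have hm : Epi d' := by
    haveI : Epi (f' ≫ d') := by rw [hd]; infer_instance
    exact epi_of_epi f' _
  obtain ⟨y, hy⟩ := conf_desc E h (f' ≫ (e.inv ≫ q)) (by
    rw [← Category.assoc, hp.w, Category.assoc, E.comp_zero h1, comp_zero])
  refine conf_coker_swap E h1 hd0 hm y (hp.hom_ext ?_ ?_)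
  · rw [← Category.assoc, hd, hy]
  · rw [← Category.assoc, hd0, E.comp_zero h1, zero_comp]

theorem biprod_map_isPullback {A B W : 𝒜} (α : A ⟶ B) :
    IsPullback (biprod.fst : A ⊞ W ⟶ A) (biprod.map α (𝟙 W)) α biprod.fst := by
  refine IsPullback.of_isLimit' ⟨by simp⟩ (PullbackCone.IsLimit.mk _
    (fun s => biprod.lift s.fst (s.snd ≫ biprod.snd)) (fun s => by simp) (fun s => ?_)
    (fun s m h1 h2 => ?_))
  · ext
    · simp [s.condition]
    · simp
  · ext
    · simp [h1]
    · simp [← h2]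

theorem defl_of_comp (E : ExactStructure 𝒜) (hwic : IsWIC E) {P Q C K : 𝒜} (f : P ⟶ Q)
    (g : Q ⟶ C) {k : K ⟶ P} (hk : E.conflation k (f ≫ g)) :
    ∃ (M : 𝒜) (m : M ⟶ Q), E.conflation m g := by
  obtain ⟨k1, h1⟩ := conf_pullback E hk (biprod_map_isPullback (W := Q) (f ≫ g))
  obtain ⟨V, v, hv⟩ := hwic (biprod.desc (𝟙 C) g) biprod.inl (by simp)
  obtain ⟨L, l, hl0⟩ := E.deflation_comp h1 hv
  let e : P ⊞ Q ≅ P ⊞ Q := ⟨biprod.desc (biprod.lift (𝟙 P) f) biprod.inr,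
    biprod.desc (biprod.lift (𝟙 P) (-f)) biprod.inr,
    by ext <;> simp [biprod.lift_desc], by ext <;> simp [biprod.lift_desc]⟩
  have hl' : E.conflation (l ≫ e.hom) (biprod.desc 0 g) :=
    E.conflation_iso (Iso.refl _) e (Iso.refl _) hl0 (by simp) (by
      ext <;> simp [e, biprod.lift_desc])
  generalize l ≫ e.hom = l at hl'
  obtain ⟨s, hs⟩ := conf_lift E hl' biprod.inl (by simp)
  have hsr : s ≫ (l ≫ biprod.fst) = 𝟙 P := by rw [← Category.assoc, hs]; simp
  obtain ⟨M, n, hn⟩ := hwic (l ≫ biprod.fst) s hsr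
  haveI := conf_mono E hn
  have hn0 := E.comp_zero hn
  obtain ⟨p, hp⟩ := conf_lift E hn (𝟙 L - (l ≫ biprod.fst) ≫ s) (by
    rw [Preadditive.sub_comp, Category.assoc _ s, hsr]; simp)
  have hnp : n ≫ p = 𝟙 M := by
    rw [← cancel_mono n, Category.assoc, hp, Preadditive.comp_sub, ← Category.assoc n, hn0]; simp
  have hsp : s ≫ p = 0 := by
    rw [← cancel_mono n, Category.assoc, hp, Preadditive.comp_sub, ← Category.assoc s, hsr]; simp
  have key : ∀ {T : 𝒜} (a : P ⊞ Q ⟶ T), biprod.inl ≫ a = 0 →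
      biprod.snd ≫ biprod.inr ≫ a = a := by
    intro T a ha
    ext
    · simp [ha]
    · simp
  have hw : l ≫ biprod.snd = p ≫ (n ≫ l ≫ biprod.snd) := by
    rw [← Category.assoc p, hp, Preadditive.sub_comp, Category.assoc _ s, ← Category.assoc s, hs]
    simp
  have hinl : ∀ {T : 𝒜} (a : P ⊞ Q ⟶ T) (b : M ⟶ T), l ≫ a = p ≫ b → biprod.inl ≫ a = 0 := by
    intro T a b hab
    rw [← hs, Category.assoc, hab, ← Category.assoc, hsp, zero_comp]
  have hpo : IsPushout l p biprod.snd (n ≫ l ≫ biprod.snd) := by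
    refine IsPushout.of_isColimit' ⟨hw⟩ (PushoutCocone.IsColimit.mk _
      (fun c => biprod.inr ≫ c.inl) (fun c => ?_) (fun c => ?_) (fun c m h1 h2 => ?_))
    · exact key _ (hinl _ _ c.condition)
    · rw [Category.assoc, Category.assoc, key _ (hinl _ _ c.condition), c.condition,
        ← Category.assoc, hnp, Category.id_comp]
    · rw [← h1]; simp
  have hg : (biprod.snd : P ⊞ Q ⟶ Q) ≫ g = biprod.desc 0 g := by ext <;> simp
  refine ⟨M, _, conf_pushout E hl' hpo g hg ?_⟩
  rw [Category.assoc, Category.assoc, hg, E.comp_zero hl', comp_zero]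

end Helpers

/-- If `α ∈ TFib_ω` and `βα ∈ Weq_ω` then `β ∈ Weq_ω`. -/
theorem stmt_12 (E : ExactStructure 𝒜) (hwic : IsWIC E) (X Y : Set 𝒜)
    (hcp : IsCotorsionPair E X Y) (hcomp : IsCompleteCP E X Y)
    (hher : IsHereditaryCP E X Y) (hcf : IsContravariantlyFinite (X ∩ Y))
    {A B C : 𝒜} (α : A ⟶ B) (β : B ⟶ C)
    (hα : TFibO E Y α) (hβα : WeqO E (X ∩ Y) Y (α ≫ β)) :
    WeqO E (X ∩ Y) Y β := by
  obtain ⟨K₁, k₁, hk₁, hK₁⟩ := hα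
  obtain ⟨W, hW, t, K, k, hk, hK⟩ := hβα
  obtain ⟨j, hj⟩ := conf_pullback E hk₁ (biprod_map_isPullback (W := W) α)
  have hfg : biprod.desc (α ≫ β) t = biprod.map α (𝟙 W) ≫ biprod.desc β t := by
    ext <;> simp
  rw [hfg] at hk
  obtain ⟨M, m, hm⟩ := defl_of_comp E hwic _ _ hk
  haveI := conf_mono E hm
  haveI := conf_mono E hk
  obtain ⟨y, hy⟩ := conf_lift E hm (k ≫ biprod.map α (𝟙 W)) (by
    rw [Category.assoc, E.comp_zero hk])
  have hc : ∀ s : PullbackCone (biprod.map α (𝟙 W)) m, ∃ z : s.pt ⟶ K, z ≫ k = s.fst :=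
    fun s => conf_lift E hk s.fst (by
      rw [← Category.assoc, s.condition, Category.assoc, E.comp_zero hm, comp_zero])
  choose z hz using hc
  have hpb : IsPullback k y (biprod.map α (𝟙 W)) m := by
    refine IsPullback.of_isLimit' ⟨hy.symm⟩ (PullbackCone.IsLimit.mk _ z hz (fun s => ?_)
      (fun s m' h1 _ => ?_))
    · rw [← cancel_mono m, Category.assoc, hy, ← Category.assoc, hz, s.condition]
    · rw [← cancel_mono k, h1, hz]
  obtain ⟨u, hu⟩ := conf_pullback E hj hpb
  exact ⟨W, hW, t, M, m, hm, hher.2 u y hu hK₁ hK⟩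
end

section
/- Let 𝒜 be a weakly idempotent complete exact category and (𝒳,𝒴) a hereditary complete cotorsion pair in 𝒜 with ω = 𝒳∩𝒴. Suppose α = p∘i ∈ Weq_ω where i ∈ CoFib_ω (an inflation with cokernel in 𝒳) and p ∈ TFib_ω (a deflation with kernel in 𝒴). Then i ∈ TCoFib_ω, i.e. i is a split monomorphism with cokernel in ω. -/
open CategoryTheory Limits ZeroObject

universe v u

variable {𝒜 : Type u} [Category.{v} 𝒜] [Preadditive 𝒜] [HasZeroObject 𝒜]
  [HasBinaryBiproducts 𝒜]

/-- Kernel property of a conflation. -/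
theorem confl_lift (E : ExactStructure 𝒜) {A B C T : 𝒜} {j : A ⟶ B} {d : B ⟶ C}
    (h : E.conflation j d) (f : T ⟶ B) (hf : f ≫ d = 0) : ∃ g : T ⟶ A, g ≫ j = f := by
  obtain ⟨hl⟩ := E.isKernel h
  obtain ⟨g, hg⟩ := KernelFork.IsLimit.lift' hl f hf
  exact ⟨g, by simpa using hg⟩

/-- Cokernel property of a conflation. -/
theorem confl_desc (E : ExactStructure 𝒜) {A B C T : 𝒜} {j : A ⟶ B} {d : B ⟶ C}
    (h : E.conflation j d) (f : B ⟶ T) (hf : j ≫ f = 0) : ∃ g : C ⟶ T, d ≫ g = f := by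
  obtain ⟨hl⟩ := E.isCokernel h
  obtain ⟨g, hg⟩ := CokernelCofork.IsColimit.desc' hl f hf
  exact ⟨g, by simpa using hg⟩

theorem confl_mono (E : ExactStructure 𝒜) {A B C : 𝒜} {j : A ⟶ B} {d : B ⟶ C}
    (h : E.conflation j d) : Mono j := by
  obtain ⟨hl⟩ := E.isKernel h
  exact mono_of_isLimit_fork hl

theorem confl_epi (E : ExactStructure 𝒜) {A B C : 𝒜} {j : A ⟶ B} {d : B ⟶ C}
    (h : E.conflation j d) : Epi d := by
  obtain ⟨hl⟩ := E.isCokernel h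
  exact epi_of_isColimit_cofork hl

/-- If `Ext¹(Z,K) = 0`, maps into `K` extend along inflations with cokernel `Z`. -/
theorem ext_extend (E : ExactStructure 𝒜) {A B Z K : 𝒜} {j : A ⟶ B} {d : B ⟶ Z}
    (h : E.conflation j d) (hE : Ext1IsZero E Z K) (f : A ⟶ K) :
    ∃ g : B ⟶ K, j ≫ g = f := by
  obtain ⟨P, f', i', Q, q, hpo, hc⟩ := E.pushout_inflation h f
  have := confl_epi E h
  have := confl_epi E hc
  have w : j ≫ d = f ≫ (0 : K ⟶ Z) := by rw [E.comp_zero h, comp_zero]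
  have h1 : f' ≫ hpo.desc d 0 w = d := hpo.inl_desc _ _ _
  have h2 : i' ≫ hpo.desc d 0 w = 0 := hpo.inr_desc _ _ _
  obtain ⟨u, hu⟩ := confl_desc E hc (hpo.desc d 0 w) h2
  obtain ⟨v, hv⟩ := confl_desc E h (f' ≫ q) (by
    rw [← Category.assoc, hpo.w, Category.assoc, E.comp_zero hc, comp_zero])
  have hD : hpo.desc d 0 w ≫ v = q := by
    apply hpo.hom_ext
    · rw [← Category.assoc, h1, hv]
    · rw [← Category.assoc, h2, E.comp_zero hc, zero_comp]
  have huv : u ≫ v = 𝟙 Q := by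
    rw [← cancel_epi q, ← Category.assoc, hu, hD, Category.comp_id]
  have hvu : v ≫ u = 𝟙 Z := by
    rw [← cancel_epi d, ← Category.assoc, hv, Category.assoc, hu, h1, Category.comp_id]
  have hc' : E.conflation i' (hpo.desc d 0 w) :=
    E.conflation_iso (Iso.refl K) (Iso.refl P) ⟨u, v, huv, hvu⟩ hc (by simp) (by simpa using hu)
  obtain ⟨r, hr⟩ := hE i' _ hc'
  exact ⟨f' ≫ r, by rw [← Category.assoc, hpo.w, Category.assoc, hr, Category.comp_id]⟩

/-- Inflations with cokernel `Z` lift against deflations with kernel `K`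
if `Ext¹(Z,K) = 0`. -/
theorem ext_lifting (E : ExactStructure 𝒜) {A B Z K M N : 𝒜} {j : A ⟶ B} {d : B ⟶ Z}
    (h : E.conflation j d) {k : K ⟶ M} {p : M ⟶ N} (hp : E.conflation k p)
    (hE : Ext1IsZero E Z K) (a : A ⟶ M) (b : B ⟶ N) (w : a ≫ p = j ≫ b) :
    ∃ s : B ⟶ M, j ≫ s = a ∧ s ≫ p = b := by
  obtain ⟨P, f', p', K', kk, hpb, hc⟩ := E.pullback_deflation hp b
  obtain ⟨L, k', hk'⟩ := E.deflation_comp hc h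
  have := confl_mono E h
  have := confl_mono E hk'
  have := confl_mono E hp
  have := confl_epi E hc
  obtain ⟨e, he1, he2⟩ : ∃ e : A ⟶ P, e ≫ f' = a ∧ e ≫ p' = j :=
    ⟨hpb.lift a j w, hpb.lift_fst _ _ _, hpb.lift_snd _ _ _⟩
  obtain ⟨m, hm⟩ := confl_lift E h (k' ≫ p') (by
    rw [Category.assoc]; exact E.comp_zero hk')
  obtain ⟨e', he'⟩ := confl_lift E hk' e (by
    rw [← Category.assoc, he2, E.comp_zero h])
  obtain ⟨n, hn⟩ := confl_lift E hk' kk (by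
    rw [← Category.assoc, E.comp_zero hc, zero_comp])
  obtain ⟨ρ, hρ⟩ := confl_lift E hp ((k' - m ≫ e) ≫ f') (by
    rw [Category.assoc, hpb.w, ← Category.assoc, Preadditive.sub_comp, Category.assoc, he2, hm,
      sub_self, zero_comp])
  have hnm : n ≫ m = 0 := by
    rw [← cancel_mono j, Category.assoc, hm, ← Category.assoc, hn, E.comp_zero hc, zero_comp]
  have hem : e' ≫ m = 𝟙 A := by
    rw [← cancel_mono j, Category.assoc, hm, ← Category.assoc, he', he2, Category.id_comp]
  obtain ⟨θ, hθ⟩ := ext_extend E hk' hE ρ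
  obtain ⟨s, hs⟩ := confl_desc E hc (f' - θ ≫ k) (by
    have : kk ≫ θ ≫ k = kk ≫ f' := by
      rw [← hn, Category.assoc, reassoc_of% hθ, hρ, Preadditive.sub_comp, Preadditive.comp_sub,
        Category.assoc, reassoc_of% hnm, zero_comp, sub_zero, Category.assoc]
    rw [Preadditive.comp_sub, this, sub_self])
  refine ⟨s, ?_, ?_⟩
  · have : e ≫ θ ≫ k = 0 := by
      rw [← he', Category.assoc, reassoc_of% hθ, hρ, Preadditive.sub_comp, Preadditive.comp_sub,
        Category.assoc, reassoc_of% hem, reassoc_of% he', sub_self]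
    rw [← he2, Category.assoc, hs, Preadditive.comp_sub, this, sub_zero, he1]
  · rw [← cancel_epi p', reassoc_of% hs, Preadditive.sub_comp, Category.assoc, E.comp_zero hp,
      comp_zero, sub_zero, hpb.w]

/-- If `α = p ∘ i ∈ Weq_ω` with `i ∈ CoFib_ω` and `p ∈ TFib_ω`, then
`i ∈ TCoFib_ω`. -/
theorem stmt_13 (E : ExactStructure 𝒜) (hwic : IsWIC E) (X Y : Set 𝒜)
    (hcp : IsCotorsionPair E X Y) (hcomp : IsCompleteCP E X Y)
    (hher : IsHereditaryCP E X Y)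
    {A M B : 𝒜} (i : A ⟶ M) (p : M ⟶ B)
    (hi : CoFibO E X i) (hp : TFibO E Y p) (hip : WeqO E (X ∩ Y) Y (i ≫ p)) :
    TCoFibO E (X ∩ Y) i := by
  obtain ⟨Z, d, hd, hZ⟩ := hi
  obtain ⟨Kp, kp, hkp, hKp⟩ := hp
  obtain ⟨W, hW, t, K, k, hk, hK⟩ := hip
  obtain ⟨r, hr1, hr2⟩ := ext_lifting E hd hk ((hcp.1 Z).1 hZ K hK) biprod.inl p (by simp)
  have hret : i ≫ r ≫ biprod.fst = 𝟙 A := by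
    rw [reassoc_of% hr1, biprod.inl_fst]
  refine ⟨⟨r ≫ biprod.fst, hret⟩, Z, d, hd, hZ, (hcp.2 Z).2 ?_⟩
  have := confl_epi E hd
  -- the section of `d` killed by the retraction
  obtain ⟨q, hq⟩ := confl_desc E hd (𝟙 M - (r ≫ biprod.fst) ≫ i) (by
    rw [Preadditive.comp_sub, ← Category.assoc, hret]; simp)
  have hqd : q ≫ d = 𝟙 Z := by
    rw [← cancel_epi d, reassoc_of% hq, Preadditive.sub_comp]
    simp [E.comp_zero hd]
  obtain ⟨c, hc⟩ := confl_desc E hd (r ≫ biprod.snd) (by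
    rw [reassoc_of% hr1, biprod.inl_snd])
  have hqr : q ≫ p = c ≫ t := by
    rw [← cancel_epi d, reassoc_of% hq, reassoc_of% hc, Preadditive.sub_comp, Category.id_comp,
      sub_eq_iff_eq_add]
    conv_lhs => rw [← hr2, biprod.desc_eq]
    simp [add_comm]
  intro Z' hZ' N j e hje
  obtain ⟨c', hc'⟩ := ext_extend E hje ((hcp.1 Z').1 hZ' W hW.2) c
  obtain ⟨l, hl, -⟩ := ext_lifting E hje hkp ((hcp.1 Z').1 hZ' Kp hKp) q (c' ≫ t) (by
    rw [reassoc_of% hc', hqr])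
  exact ⟨l ≫ d, by rw [reassoc_of% hl, hqd]⟩
end

section
/- Let (CoFib, Fib, Weq) be a closed model structure on an exact category 𝒜, with 𝒞 the class of cofibrant objects and T𝓕 the class of trivially fibrant objects. Then: (1) if every inflation with cofibrant cokernel is a cofibration, then Ext¹(C,Y) = 0 for all C∈𝒞 and Y∈T𝓕; (3) if every trivial fibration is a deflation, then every object A with Ext¹(A,Y)=0 for all Y∈T𝓕 belongs to 𝒞; (4) if every cofibration is an inflation, then every object B with Ext¹(C,B)=0 for all C∈𝒞 belongs to T𝓕. -/
open CategoryTheory Limits ZeroObject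

universe v u

variable {𝒜 : Type u} [Category.{v} 𝒜] [Preadditive 𝒜] [HasZeroObject 𝒜]
  [HasBinaryBiproducts 𝒜]

theorem aux_trivObj {C F W : MorphismProperty 𝒜} (hms : IsModelStructure C F W) (K : 𝒜)
    (h : W (0 : K ⟶ (0 : 𝒜))) : TrivialObj W K := by
  have hid : W (𝟙 (0 : 𝒜)) :=
    hms.weq_cancel_left (0 : K ⟶ (0 : 𝒜)) (𝟙 _) h (by simpa using h)
  refine hms.weq_cancel_right (0 : (0 : 𝒜) ⟶ K) (0 : K ⟶ (0 : 𝒜)) h ?_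
  have e : (0 : (0 : 𝒜) ⟶ K) ≫ (0 : K ⟶ (0 : 𝒜)) = 𝟙 _ := (isZero_zero 𝒜).eq_of_src _ _
  rw [e]; exact hid

theorem aux_weqToZero {C F W : MorphismProperty 𝒜} (hms : IsModelStructure C F W) (K : 𝒜)
    (h : TrivialObj W K) : W (0 : K ⟶ (0 : 𝒜)) := by
  have h' : W (0 : (0 : 𝒜) ⟶ K) := h
  have hid : W (𝟙 (0 : 𝒜)) :=
    hms.weq_cancel_right (𝟙 _) (0 : (0 : 𝒜) ⟶ K) h' (by simpa using h')
  refine hms.weq_cancel_left (0 : (0 : 𝒜) ⟶ K) (0 : K ⟶ (0 : 𝒜)) h' ?_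
  have e : (0 : (0 : 𝒜) ⟶ K) ≫ (0 : K ⟶ (0 : 𝒜)) = 𝟙 _ := (isZero_zero 𝒜).eq_of_src _ _
  rw [e]; exact hid

/-- Retracts of trivially fibrant objects are trivially fibrant. -/
theorem aux_retract_TF {C F W : MorphismProperty 𝒜} (hms : IsModelStructure C F W) {K Z : 𝒜}
    (j : K ⟶ Z) (r : Z ⟶ K) (hr : j ≫ r = 𝟙 K) (q : Z ⟶ (0 : 𝒜)) (hF : F q) (hW : W q) :
    Fibrant F K ∧ TrivialObj W K := by
  have hret : IsRetractMor (0 : K ⟶ (0 : 𝒜)) q :=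
    ⟨j, r, 𝟙 _, 𝟙 _, hr, by simp, (isZero_zero 𝒜).eq_of_tgt _ _,
      (isZero_zero 𝒜).eq_of_tgt _ _⟩
  exact ⟨hms.retract_fib _ _ hret hF, aux_trivObj hms K (hms.retract_weq _ _ hret hW)⟩

/-- Retracts of cofibrant objects are cofibrant. -/
theorem aux_retract_C {C F W : MorphismProperty 𝒜} (hms : IsModelStructure C F W) {A Z : 𝒜}
    (s : A ⟶ Z) (q : Z ⟶ A) (hs : s ≫ q = 𝟙 A) (j : (0 : 𝒜) ⟶ Z) (hC : C j) :
    Cofibrant C A :=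
  hms.retract_cofib _ j ⟨𝟙 _, 𝟙 _, s, q, by simp, hs, (isZero_zero 𝒜).eq_of_src _ _,
      (isZero_zero 𝒜).eq_of_src _ _⟩ hC

/-- Parts (1), (3), (4) of [BR, VIII, 3.2] for exact categories. -/
theorem stmt_15 (E : ExactStructure 𝒜) (C F W : MorphismProperty 𝒜)
    (hms : IsModelStructure C F W) :
    ((∀ {A B Z : 𝒜} (f : A ⟶ B) (d : B ⟶ Z),
        E.conflation f d → Cofibrant C Z → C f) →
      ∀ A B : 𝒜, Cofibrant C A → (Fibrant F B ∧ TrivialObj W B) → Ext1IsZero E A B) ∧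
    (TrivFibsAreDefl E F W →
      ∀ A : 𝒜, (∀ B : 𝒜, (Fibrant F B ∧ TrivialObj W B) → Ext1IsZero E A B) →
        Cofibrant C A) ∧
    (CofibsAreInfl E C →
      ∀ B : 𝒜, (∀ A : 𝒜, Cofibrant C A → Ext1IsZero E A B) →
        (Fibrant F B ∧ TrivialObj W B)) := by
  refine ⟨?_, ?_, ?_⟩
  · intro h A B hA hB M i d hc
    obtain ⟨r, hr, -⟩ := hms.lifting_right i (0 : B ⟶ (0 : 𝒜)) (𝟙 B) 0 (h i d hc hA) hB.1
      (aux_weqToZero hms B hB.2) (by simp)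
    exact ⟨r, hr⟩
  · intro h A hA
    obtain ⟨Z, j, q, -, hj, hqF, hqW⟩ := hms.fact_right (0 : (0 : 𝒜) ⟶ A)
    obtain ⟨K, k, hc⟩ := h q hqF hqW
    obtain ⟨hk⟩ := E.isKernel hc
    obtain ⟨hq⟩ := E.isCokernel hc
    have hkq := E.comp_zero hc
    obtain ⟨Z', j', q', -, hj', hqF', hqW'⟩ := hms.fact_right (0 : K ⟶ (0 : 𝒜))
    obtain ⟨t, ht1, ht2⟩ := hms.lifting_right j' q k 0 hj' hqF hqW (by simp [hkq])
    obtain ⟨r, hr⟩ : ∃ r : Z' ⟶ K, r ≫ k = t := by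
      obtain ⟨l, hl⟩ := KernelFork.IsLimit.lift' hk t ht2
      exact ⟨l, by simpa using hl⟩
    have hjr : j' ≫ r = 𝟙 K := by
      apply Fork.IsLimit.hom_ext hk
      simp [hr, ht1]
    obtain ⟨ρ, hρ⟩ := hA K (aux_retract_TF hms j' r hjr q' hqF' hqW') k q hc
    obtain ⟨s, hs⟩ : ∃ s : A ⟶ Z, q ≫ s = 𝟙 Z - ρ ≫ k := by
      obtain ⟨l, hl⟩ := CokernelCofork.IsColimit.desc' hq (𝟙 Z - ρ ≫ k) (by
        rw [Preadditive.comp_sub, ← Category.assoc, hρ]; simp)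
      exact ⟨l, by simpa using hl⟩
    have hsq : s ≫ q = 𝟙 A := by
      apply Cofork.IsColimit.hom_ext hq
      have : q ≫ s ≫ q = q := by
        rw [← Category.assoc, hs, Preadditive.sub_comp, Category.assoc, hkq]; simp
      simpa using this
    exact aux_retract_C hms s q hsq j hj
  · intro h B hB
    obtain ⟨Z, j, q, -, hj, hqF, hqW⟩ := hms.fact_right (0 : B ⟶ (0 : 𝒜))
    obtain ⟨Q, d, hc⟩ := h j hj
    obtain ⟨hd⟩ := E.isCokernel hc
    have hjd := E.comp_zero hc
    obtain ⟨Z', j', q', -, hj', hqF', hqW'⟩ := hms.fact_right (0 : (0 : 𝒜) ⟶ Q)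
    obtain ⟨t, ht1, ht2⟩ := hms.lifting_right j q' 0 d hj hqF' hqW' (by simp [hjd])
    obtain ⟨s, hs⟩ : ∃ s : Q ⟶ Z', d ≫ s = t := by
      obtain ⟨l, hl⟩ := CokernelCofork.IsColimit.desc' hd t ht1
      exact ⟨l, by simpa using hl⟩
    have hsq : s ≫ q' = 𝟙 Q := by
      apply Cofork.IsColimit.hom_ext hd
      have : d ≫ s ≫ q' = d := by rw [← Category.assoc, hs, ht2]
      simpa using this
    obtain ⟨r, hr⟩ := hB Q (aux_retract_C hms s q' hsq j' hj') j d hc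
    exact aux_retract_TF hms j r hr q hqF hqW
end
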